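/- Let X = c₀(ℤ) or X = ℓ^p(ℤ) for some p ∈ [1,∞). There exists a bounded sequence w = (w_j)_{j∈ℤ} of scalars with inf_{j∈ℤ} |w_j| > 0 such that the bilateral weighted backward shift B_w : (x_j)_{j∈ℤ} ↦ (w_{j+1}x_{j+1})_{j∈ℤ} is an invertible bounded operator on X that is topologically transitive, and both B_w and B_w⁻¹ are average positively expansive and distributionally chaotic. -/

import Mathlib

/-!
Writing the weights as `w j = v (j - 1) / v j` with `v : ℤ → (0, ∞)`, the shift satisfies
`B_wⁿ e_k = (v (k - n) / v k) e_{k - n}` and `B_w⁻ⁿ e_k = (v (k + n) / v k) e_{k + n}`, so the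
dynamics is read off from the size of `v`. The profile `v` is chosen even, with
`v j / 2 ≤ v (j + 1) ≤ 2 v j` (which makes `w` bounded above and below), with `v 0 = 1`, and such
that for all `M` and all `τ > 0` both `{n : M ≤ v n}` and `{n : v n < τ}` have upper density one
(`exists_profile`): `v j = 2 ^ h (log₂ log₂ |j|)`, where `h` moves by steps of at most one and is
unbounded in both directions. It is constant on blocks `[P, P²)`, each of which fills almost all
of `[1, P²]`.

Then `‖B_wⁿ e₀‖ = ‖B_w⁻ⁿ e₀‖ = v n`, and:
* the line `ℝ e₀` is a distributionally scrambled set for both operators;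
* if `x_k ≠ 0`, then `‖B_w^{±n} x‖ ≥ |x_k| v (k ∓ n) / v k ≥ c v n`, and the averages of `v` are
  unbounded, whence average positive expansivity;
* along some sequence `n_i` both `B_w^{n_i}` and `B_w^{-n_i}` tend to `0` on the span of the `e_k`,
  so for `x`, `y` in this dense span, `x + B_w^{-n_i} y` is close to `x` and its image under
  `B_w^{n_i}` is close to `y`, which gives transitivity.

The two families of spaces are treated at once through `IsShiftSolid`.
-/

open Filter Topology
open scoped ZeroAtInfty ENNReal

/-- A map `T` on a topological space is topologically transitive if for every pair of
nonempty open sets `A, B` there is `n ∈ ℕ₀` with `Tⁿ(A) ∩ B ≠ ∅`. -/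
def TopologicallyTransitive {X : Type*} [TopologicalSpace X] (T : X → X) : Prop :=
  ∀ A B : Set X, IsOpen A → IsOpen B → A.Nonempty → B.Nonempty →
    ∃ n : ℕ, (T^[n] '' A ∩ B).Nonempty

/-- The upper density of a set `A ⊆ ℕ`: `limsup_{n→∞} card(A ∩ [1,n]) / n`. -/
noncomputable def upperDensity (A : Set ℕ) : ℝ :=
  Filter.limsup (fun n : ℕ => ((A ∩ Set.Icc 1 n).ncard : ℝ) / n) Filter.atTop

/-- An operator `T` on a normed space is average positively expansive if
`sup_{n ∈ ℕ} n⁻¹ ∑_{j=0}^{n-1} ‖Tʲ x‖ = ∞` for every `x ≠ 0`. -/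
def AvgPosExpansiveNorm {X : Type*} [NormedAddCommGroup X] (T : X → X) : Prop :=
  ∀ x : X, x ≠ 0 → ∀ C : ℝ, ∃ n : ℕ, 0 < n ∧ C < (n : ℝ)⁻¹ * ∑ j ∈ Finset.range n, ‖T^[j] x‖

/-- An operator `T` on a normed space is distributionally chaotic if there exist an
uncountable set `Γ` and `ε > 0` such that every pair of distinct points `x, y ∈ Γ` is a
distributionally chaotic pair for `T`. -/
def DistributionallyChaotic {X : Type*} [NormedAddCommGroup X] (T : X → X) : Prop :=
  ∃ (Γ : Set X) (ε : ℝ), 0 < ε ∧ ¬ Γ.Countable ∧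
    ∀ x ∈ Γ, ∀ y ∈ Γ, x ≠ y →
      upperDensity {n : ℕ | ε ≤ ‖T^[n] x - T^[n] y‖} = 1 ∧
      ∀ τ : ℝ, 0 < τ → upperDensity {n : ℕ | ‖T^[n] x - T^[n] y‖ < τ} = 1

/-! ### Upper density -/

section Density

lemma density_quotient_nonneg (A : Set ℕ) (n : ℕ) :
    0 ≤ ((A ∩ Set.Icc 1 n).ncard : ℝ) / n := by positivity

lemma density_quotient_le_one (A : Set ℕ) (n : ℕ) :
    ((A ∩ Set.Icc 1 n).ncard : ℝ) / n ≤ 1 := by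
  apply div_le_one_of_le₀ _ (by positivity)
  have h : (A ∩ Set.Icc 1 n).ncard ≤ (Set.Icc 1 n).ncard :=
    Set.ncard_le_ncard Set.inter_subset_right (Set.finite_Icc 1 n)
  have h2 : (Set.Icc 1 n).ncard = n := by
    rw [Set.ncard_eq_toFinset_card']; simp
  exact_mod_cast h2 ▸ h

lemma density_isBoundedUnder (A : Set ℕ) :
    IsBoundedUnder (· ≤ ·) atTop (fun n : ℕ => ((A ∩ Set.Icc 1 n).ncard : ℝ) / n) :=
  isBoundedUnder_of ⟨1, density_quotient_le_one A⟩

lemma density_isCoboundedUnder (A : Set ℕ) :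
    IsCoboundedUnder (· ≤ ·) atTop (fun n : ℕ => ((A ∩ Set.Icc 1 n).ncard : ℝ) / n) :=
  IsBoundedUnder.isCoboundedUnder_le (isBoundedUnder_of ⟨0, density_quotient_nonneg A⟩)

lemma exists_half_lt_of_upperDensity_eq_one {A : Set ℕ} (h : upperDensity A = 1) :
    ∃ n : ℕ, 0 < n ∧ (n : ℝ) / 2 < ((A ∩ Set.Icc 1 n).ncard : ℝ) := by
  have hlt : (1 / 2 : ℝ) <
      limsup (fun n : ℕ => ((A ∩ Set.Icc 1 n).ncard : ℝ) / n) atTop := by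
    rw [upperDensity] at h
    rw [h]; norm_num
  have hf := frequently_lt_of_lt_limsup (density_isCoboundedUnder A) hlt
  obtain ⟨n, hn, hpos⟩ := (hf.and_eventually (eventually_gt_atTop 0)).exists
  refine ⟨n, hpos, ?_⟩
  have hn' : (0 : ℝ) < n := by exact_mod_cast hpos
  rw [lt_div_iff₀ hn'] at hn
  linarith

lemma nonempty_of_upperDensity_eq_one {A : Set ℕ} (h : upperDensity A = 1) : A.Nonempty := by
  obtain ⟨n, hn, hlt⟩ := exists_half_lt_of_upperDensity_eq_one h
  by_contra hA
  rw [Set.not_nonempty_iff_eq_empty] at hA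
  subst hA
  simp at hlt
  have : (0 : ℝ) ≤ n := by positivity
  linarith

/-- The blocks are `{n : log₂ log₂ n = m} = [P, P²)` with `P = 2 ^ 2 ^ m`, and such a block has
proportion at least `1 - 1 / P` in `[1, P²]`. -/
lemma upperDensity_eq_one_of_blocks {A : Set ℕ}
    (h : ∀ N : ℕ, ∃ m ≥ N, ∀ n : ℕ, Nat.log 2 (Nat.log 2 n) = m → n ∈ A) :
    upperDensity A = 1 := by
  apply le_antisymm
  · exact limsup_le_of_le (density_isCoboundedUnder A)
      (Eventually.of_forall (density_quotient_le_one A))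
  · refine le_of_forall_pos_le_add fun ε hε => ?_
    rw [← sub_le_iff_le_add]
    refine le_limsup_of_frequently_le ?_ (density_isBoundedUnder A)
    rw [frequently_atTop]
    intro N
    obtain ⟨K, hK⟩ := exists_nat_gt (1 / ε)
    obtain ⟨m, hm, hblock⟩ := h (max N (K + 1))
    have hNm : N ≤ m := (le_max_left _ _).trans hm
    have hKm : K + 1 ≤ m := (le_max_right _ _).trans hm
    set P : ℕ := 2 ^ 2 ^ m with hP
    have hmP : m < P := (Nat.lt_two_pow_self).trans Nat.lt_two_pow_self
    have hPP : 2 ^ 2 ^ (m + 1) = P * P := by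
      rw [hP, ← pow_add]; congr 1; ring
    have hP1 : 1 ≤ P := by omega
    refine ⟨P * P, by nlinarith, ?_⟩
    have hsub : Set.Ico P (P * P) ⊆ A ∩ Set.Icc 1 (P * P) := by
      intro n hn
      refine ⟨hblock n ?_, by have := hn.1; omega, hn.2.le⟩
      have hm0 : m ≠ 0 := by omega
      have hn0 : n ≠ 0 := by have := hn.1; omega
      rw [Nat.log_eq_iff (Or.inl hm0)]
      constructor
      · exact Nat.le_log_of_pow_le (by norm_num) hn.1
      · exact Nat.log_lt_of_lt_pow hn0 (hPP ▸ hn.2)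
    have hcard : P * P - P ≤ (A ∩ Set.Icc 1 (P * P)).ncard := by
      have h1 := Set.ncard_le_ncard hsub ((Set.finite_Icc 1 (P * P)).inter_of_right A)
      have h2 : (Set.Ico P (P * P)).ncard = P * P - P := by
        rw [Set.ncard_eq_toFinset_card']; simp
      omega
    have hle : P ≤ P * P := Nat.le_mul_self P
    have hcard' : (P : ℝ) * P - P ≤ ((A ∩ Set.Icc 1 (P * P)).ncard : ℝ) := by
      have : ((P * P - P : ℕ) : ℝ) ≤ ((A ∩ Set.Icc 1 (P * P)).ncard : ℝ) := by
        exact_mod_cast hcard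
      rw [Nat.cast_sub hle] at this
      push_cast at this
      exact this
    have hPpos : (0 : ℝ) < P := by exact_mod_cast hP1
    have hKP : (K : ℝ) ≤ P := by
      have : K ≤ P := by omega
      exact_mod_cast this
    have hεP : 1 ≤ ε * P := by
      rw [div_lt_iff₀ hε] at hK
      nlinarith
    push_cast
    rw [le_div_iff₀ (by positivity)]
    nlinarith

end Density

/-! ### The profile -/

section Profile

/-- A path with steps of size at most one: on `[k², (k + 1)²]` it is a tent of height `k`, pointing
up for even `k` and down for odd `k`. -/
def zigzag (m : ℕ) : ℤ :=
  if Even (Nat.sqrt m) then ((min (m - (Nat.sqrt m) ^ 2) ((Nat.sqrt m + 1) ^ 2 - m) : ℕ) : ℤ)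
  else -((min (m - (Nat.sqrt m) ^ 2) ((Nat.sqrt m + 1) ^ 2 - m) : ℕ) : ℤ)

lemma zigzag_of_mem {m k : ℕ} (h1 : k ^ 2 ≤ m) (h2 : m < (k + 1) ^ 2) :
    zigzag m = (-1) ^ k * ((min (m - k ^ 2) ((k + 1) ^ 2 - m) : ℕ) : ℤ) := by
  have hk : Nat.sqrt m = k := by
    rw [Nat.eq_sqrt'.mpr ⟨h1, h2⟩ |>.symm]
  rw [zigzag, hk]
  split_ifs with h
  · rw [h.neg_one_pow, one_mul]
  · rw [(Nat.not_even_iff_odd.mp h).neg_one_pow, neg_one_mul]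

lemma abs_zigzag_succ_sub (m : ℕ) : |zigzag (m + 1) - zigzag m| ≤ 1 := by
  obtain ⟨k, h1, h2⟩ : ∃ k, k ^ 2 ≤ m ∧ m < (k + 1) ^ 2 :=
    ⟨Nat.sqrt m, Nat.sqrt_le' m, Nat.lt_succ_sqrt' m⟩
  rw [zigzag_of_mem h1 h2]
  have habs : |(-1 : ℤ) ^ k| = 1 := by simp
  by_cases h : m + 1 < (k + 1) ^ 2
  · rw [zigzag_of_mem (by omega) h, ← mul_sub, abs_mul, habs, one_mul, abs_le]
    omega
  · have h3 : m + 1 = (k + 1) ^ 2 := by omega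
    have h4 : zigzag (m + 1) = 0 := by
      rw [zigzag_of_mem (k := k + 1) h3.ge (by rw [h3]; gcongr; omega), h3]
      simp
    rw [h4, zero_sub, abs_neg, abs_mul, habs, one_mul, abs_le]
    omega

lemma zigzag_peak (k : ℕ) : zigzag (k ^ 2 + k) = (-1) ^ k * (k : ℤ) := by
  rw [zigzag_of_mem (k := k) (by omega) (by nlinarith)]
  congr 2
  have : (k + 1) ^ 2 = k ^ 2 + k + (k + 1) := by ring
  omega

lemma log_succ_cases (n : ℕ) :
    Nat.log 2 (n + 1) = Nat.log 2 n ∨ Nat.log 2 (n + 1) = Nat.log 2 n + 1 := by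
  rcases Nat.eq_zero_or_pos n with rfl | hn
  · left; simp
  · have h1 : Nat.log 2 n ≤ Nat.log 2 (n + 1) := Nat.log_mono_right (by omega)
    have h2 : Nat.log 2 (n + 1) ≤ Nat.log 2 (n * 2) := Nat.log_mono_right (by omega)
    rw [Nat.log_mul_base (by norm_num) (by omega)] at h2
    omega

/-- The profile at natural arguments. -/
noncomputable def profile (n : ℕ) : ℝ := 2 ^ zigzag (Nat.log 2 (Nat.log 2 n))

lemma profile_pos (n : ℕ) : 0 < profile n := by unfold profile; positivity

lemma profile_zero : profile 0 = 1 := by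
  have : zigzag 0 = 0 := by simpa using zigzag_peak 0
  simp [profile, this]

lemma profile_succ (n : ℕ) :
    profile (n + 1) ≤ 2 * profile n ∧ profile n ≤ 2 * profile (n + 1) := by
  have key : |zigzag (Nat.log 2 (Nat.log 2 (n + 1))) - zigzag (Nat.log 2 (Nat.log 2 n))| ≤ 1 := by
    rcases log_succ_cases n with h | h
    · simp [h]
    · rw [h]
      rcases log_succ_cases (Nat.log 2 n) with h' | h'
      · simp [h']
      · rw [h']; exact abs_zigzag_succ_sub _
  rw [abs_le] at key
  unfold profile
  constructor
  · rw [← zpow_one_add₀ (by norm_num : (2 : ℝ) ≠ 0)]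
    exact zpow_le_zpow_right₀ (by norm_num) (by omega)
  · rw [← zpow_one_add₀ (by norm_num : (2 : ℝ) ≠ 0)]
    exact zpow_le_zpow_right₀ (by norm_num) (by omega)

lemma upperDensity_profile_ge (M : ℝ) : upperDensity {n : ℕ | M ≤ profile n} = 1 := by
  apply upperDensity_eq_one_of_blocks
  intro N
  obtain ⟨K, hK⟩ := pow_unbounded_of_one_lt M (by norm_num : (1 : ℝ) < 2)
  refine ⟨(2 * (N + K)) ^ 2 + 2 * (N + K), by nlinarith, fun n hn => ?_⟩
  have hz := zigzag_peak (2 * (N + K))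
  rw [(even_two_mul _).neg_one_pow, one_mul] at hz
  simp only [Set.mem_ofPred_eq, profile, hn, hz, zpow_natCast]
  exact hK.le.trans (pow_le_pow_right₀ (by norm_num) (by omega))

lemma upperDensity_profile_lt {τ : ℝ} (hτ : 0 < τ) :
    upperDensity {n : ℕ | profile n < τ} = 1 := by
  apply upperDensity_eq_one_of_blocks
  intro N
  obtain ⟨K, hK⟩ := pow_unbounded_of_one_lt τ⁻¹ (by norm_num : (1 : ℝ) < 2)
  refine ⟨(2 * (N + K) + 1) ^ 2 + (2 * (N + K) + 1), by nlinarith, fun n hn => ?_⟩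
  have hz := zigzag_peak (2 * (N + K) + 1)
  rw [(odd_two_mul_add_one _).neg_one_pow, neg_one_mul] at hz
  simp only [Set.mem_ofPred_eq, profile, hn, hz, zpow_neg, zpow_natCast]
  rw [inv_lt_comm₀ (by positivity) hτ]
  exact hK.trans_le (pow_le_pow_right₀ (by norm_num) (by omega))

lemma exists_profile : ∃ v : ℤ → ℝ, (∀ j, 0 < v j) ∧ v 0 = 1 ∧ (∀ j, v (-j) = v j) ∧
    (∀ j, v (j + 1) ≤ 2 * v j) ∧ (∀ j, v j ≤ 2 * v (j + 1)) ∧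
    (∀ M : ℝ, upperDensity {n : ℕ | M ≤ v n} = 1) ∧
    (∀ τ : ℝ, 0 < τ → upperDensity {n : ℕ | v n < τ} = 1) := by
  have step : ∀ j : ℤ, (j + 1).natAbs = j.natAbs + 1 ∨ j.natAbs = (j + 1).natAbs + 1 := by
    intro j; omega
  refine ⟨fun j => profile j.natAbs, fun j => profile_pos _, by simp [profile_zero], by simp,
    fun j => ?_, fun j => ?_, fun M => by simpa using upperDensity_profile_ge M,
    fun τ hτ => by simpa using upperDensity_profile_lt hτ⟩
  · rcases step j with h | h
    · simp only [h]; exact (profile_succ _).1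
    · simp only [h]; exact (profile_succ _).2
  · rcases step j with h | h
    · simp only [h]; exact (profile_succ _).2
    · simp only [h]; exact (profile_succ _).1

end Profile

/-! ### Dynamical consequences of orbit estimates -/

section Dynamics

variable {𝕜 X : Type*} [RCLike 𝕜] [NormedAddCommGroup X] [NormedSpace 𝕜 X]

lemma distributionallyChaotic_of_orbit (T : X →L[𝕜] X) (e : X) (v : ℕ → ℝ)
    (hv : ∀ n, 0 < v n) (hTe : ∀ n, ‖T^[n] e‖ = v n)
    (hbig : ∀ M : ℝ, upperDensity {n : ℕ | M ≤ v n} = 1)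
    (hsmall : ∀ τ : ℝ, 0 < τ → upperDensity {n : ℕ | v n < τ} = 1) :
    DistributionallyChaotic T := by
  have hnorm : ∀ (r s : ℝ) (n : ℕ),
      ‖T^[n] ((r : 𝕜) • e) - T^[n] ((s : 𝕜) • e)‖ = |r - s| * v n := by
    intro r s n
    rw [← FunLike.coe_pow_eq_iterate T, ← map_sub, ← sub_smul, map_smul, norm_smul,
      FunLike.coe_pow_eq_iterate, hTe, ← RCLike.ofReal_sub, RCLike.norm_ofReal]
  refine ⟨Set.range fun r : ℝ => (r : 𝕜) • e, 1, one_pos, ?_, ?_⟩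
  · have hinj : Function.Injective fun r : ℝ => (r : 𝕜) • e := by
      intro r s hrs
      have h0 := hnorm r s 0
      simp only [Function.iterate_zero, id] at h0
      simp only at hrs
      rw [hrs, sub_self, norm_zero] at h0
      rcases mul_eq_zero.mp h0.symm with h | h
      · exact sub_eq_zero.mp (abs_eq_zero.mp h)
      · exact absurd h (hv 0).ne'
    intro hc
    rw [← Set.image_univ] at hc
    exact Cardinal.not_countable_real (Set.countable_of_injective_of_countable_image hinj.injOn hc)
  · rintro _ ⟨r, rfl⟩ _ ⟨s, rfl⟩ hne
    have hrs : 0 < |r - s| := by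
      rw [abs_pos, sub_ne_zero]
      rintro rfl
      exact hne rfl
    simp only [hnorm]
    refine ⟨?_, fun τ hτ => ?_⟩
    · simp_rw [← div_le_iff₀' hrs]
      exact hbig _
    · simp_rw [← lt_div_iff₀' hrs]
      exact hsmall _ (by positivity)

lemma avgPosExpansiveNorm_of_lower_bound (T : X → X) (v : ℕ → ℝ)
    (hlow : ∀ x : X, x ≠ 0 → ∃ c > 0, ∀ n, c * v n ≤ ‖T^[n] x‖)
    (hbig : ∀ M : ℝ, upperDensity {n : ℕ | M ≤ v n} = 1) :
    AvgPosExpansiveNorm T := by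
  intro x hx C
  obtain ⟨c, hc, hlow⟩ := hlow x hx
  set D : ℝ := |C| + 1 with hD
  have hD0 : 0 < D := by positivity
  obtain ⟨n, hn, hcard⟩ := exists_half_lt_of_upperDensity_eq_one (hbig (4 * D / c))
  refine ⟨n + 1, by omega, ?_⟩
  classical
  -- Keep only the times in `[1, n]` at which `v` is at least `4 D / c`: more than `n / 2` of them.
  let S : Finset ℕ := (Finset.Icc 1 n).filter fun k => 4 * D / c ≤ v k
  have hS : (({k : ℕ | 4 * D / c ≤ v k} ∩ Set.Icc 1 n).ncard : ℝ) = S.card := by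
    rw [← Set.ncard_coe_finset]
    congr 2
    ext k
    simp [S, and_comm]
  rw [hS] at hcard
  have hsub : S ⊆ Finset.range (n + 1) := by
    intro k hk
    simp only [S, Finset.mem_filter, Finset.mem_Icc] at hk
    simp only [Finset.mem_range]
    omega
  have hsum : (S.card : ℝ) * (4 * D) ≤ ∑ j ∈ Finset.range (n + 1), ‖T^[j] x‖ := by
    calc (S.card : ℝ) * (4 * D) = ∑ j ∈ S, 4 * D := by simp
      _ ≤ ∑ j ∈ S, ‖T^[j] x‖ := by
        refine Finset.sum_le_sum fun j hj => ?_
        simp only [S, Finset.mem_filter] at hj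
        have h2 := hj.2
        rw [div_le_iff₀' hc] at h2
        exact h2.trans (hlow j)
      _ ≤ _ := Finset.sum_le_sum_of_subset_of_nonneg hsub fun _ _ _ => norm_nonneg _
  have hn1 : (1 : ℝ) ≤ n := by exact_mod_cast hn
  have hCD : C < D := by have := le_abs_self C; linarith
  push_cast
  rw [lt_inv_mul_iff₀ (by positivity)]
  nlinarith

lemma topologicallyTransitive_of_orbit (T : X ≃L[𝕜] X) {ι : Type*} (e : ι → X) (v : ℕ → ℝ)
    (hdense : Dense (Submodule.span 𝕜 (Set.range e) : Set X))
    (hT : ∀ k, ∃ C, ∀ n, ‖T^[n] (e k)‖ ≤ C * v n)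
    (hT' : ∀ k, ∃ C, ∀ n, ‖T.symm^[n] (e k)‖ ≤ C * v n)
    (hv : ∀ n, 0 < v n)
    (hsmall : ∀ τ : ℝ, 0 < τ → ∃ n : ℕ, v n < τ) :
    TopologicallyTransitive T := by
  intro A B hA hB hA0 hB0
  obtain ⟨x, hxA, hx⟩ := hdense.inter_open_nonempty A hA hA0
  obtain ⟨y, hyB, hy⟩ := hdense.inter_open_nonempty B hB hB0
  choose n hn using fun i : ℕ => hsmall (1 / ((i : ℝ) + 1)) (by positivity)
  have hvn : Tendsto (fun i => v (n i)) atTop (𝓝 0) :=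
    squeeze_zero (fun i => (hv _).le) (fun i => (hn i).le) tendsto_one_div_add_atTop_nhds_zero_nat
  have key : ∀ S : X ≃L[𝕜] X, (∀ k, ∃ C, ∀ n, ‖S^[n] (e k)‖ ≤ C * v n) →
      ∀ z ∈ Submodule.span 𝕜 (Set.range e), Tendsto (fun i => S^[n i] z) atTop (𝓝 0) := by
    intro S hS z hz
    have hadd : ∀ (m : ℕ) (a b : X), S^[m] (a + b) = S^[m] a + S^[m] b := fun m a b =>
      iterate_map_add S m a b
    have hsmul : ∀ (m : ℕ) (c : 𝕜) (a : X), S^[m] (c • a) = c • S^[m] a := fun m c a => by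
      induction m with
      | zero => rfl
      | succ m ih => rw [Function.iterate_succ_apply', ih, map_smul, Function.iterate_succ_apply']
    induction hz using Submodule.span_induction with
    | mem z hz =>
      obtain ⟨k, rfl⟩ := hz
      obtain ⟨C, hC⟩ := hS k
      refine squeeze_zero_norm (fun i => hC (n i)) ?_
      simpa using hvn.const_mul C
    | zero => simp only [iterate_map_zero, tendsto_const_nhds]
    | add a b _ _ ha hb => simpa only [hadd, add_zero] using ha.add hb
    | smul c a _ ha => simpa only [hsmul, smul_zero] using ha.const_smul c
  have h1 : Tendsto (fun i => x + T.symm^[n i] y) atTop (𝓝 x) := by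
    simpa using (key T.symm hT' y hy).const_add x
  have h2 : Tendsto (fun i => T^[n i] x + y) atTop (𝓝 y) := by
    simpa using (key T hT x hx).add_const y
  obtain ⟨i, hiA, hiB⟩ := ((h1.eventually (hA.mem_nhds hxA)).and
    (h2.eventually (hB.mem_nhds hyB))).exists
  refine ⟨n i, T^[n i] x + y, ⟨_, hiA, ?_⟩, hiB⟩
  rw [iterate_map_add]
  congr 1
  exact Function.LeftInverse.iterate T.apply_symm_apply (n i) y

end Dynamics

/-! ### Weighted shifts on shift-solid sequence spaces -/

section Shift

variable {𝕜 X : Type*} [RCLike 𝕜] [NormedAddCommGroup X] [NormedSpace 𝕜 X]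

/-- The common features of `c₀(ℤ)` and `ℓ^p(ℤ)`: `X` is identified by `φ` with a space of
sequences, whose unit vectors `e k` are normalized and span a dense subspace, whose coordinates
are contractive, and which contains, with the expected norm bound, every sequence dominated by a
multiple of a translate of one of its members. -/
structure IsShiftSolid (φ : X →ₗ[𝕜] (ℤ → 𝕜)) (e : ℤ → X) : Prop where
  injective : Function.Injective φ
  norm_apply_le : ∀ x k, ‖φ x k‖ ≤ ‖x‖
  map_single : ∀ k, φ (e k) = Pi.single k 1
  norm_single : ∀ k, ‖e k‖ = 1
  dense_span : Dense (Submodule.span 𝕜 (Set.range e) : Set X)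
  solid : ∀ (x : X) (f : ℤ → 𝕜) (C : ℝ) (s : ℤ), 0 ≤ C → (∀ j, ‖f j‖ ≤ C * ‖φ x (j + s)‖) →
    ∃ y, φ y = f ∧ ‖y‖ ≤ C * ‖x‖

variable {φ : X →ₗ[𝕜] (ℤ → 𝕜)} {e : ℤ → X}

lemma le_two_pow_natAbs_mul {v : ℤ → ℝ} (h1 : ∀ j, v (j + 1) ≤ 2 * v j)
    (h2 : ∀ j, v j ≤ 2 * v (j + 1)) (k a : ℤ) : v (a + k) ≤ 2 ^ k.natAbs * v a := by
  have aux1 : ∀ (n : ℕ) (a : ℤ), v (a + n) ≤ 2 ^ n * v a := by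
    intro n
    induction n with
    | zero => simp
    | succ n ih =>
      intro a
      have := h1 (a + n)
      have := ih a
      push_cast
      rw [pow_succ, ← add_assoc]
      linarith
  have aux2 : ∀ (n : ℕ) (a : ℤ), v (a - n) ≤ 2 ^ n * v a := by
    intro n
    induction n with
    | zero => simp
    | succ n ih =>
      intro a
      have := h2 (a - n - 1)
      have := ih a
      push_cast
      rw [pow_succ, ← sub_sub]
      rw [sub_add_cancel] at *
      linarith
  rcases Int.natAbs_eq k with h | h
  · have := aux1 k.natAbs a
    rwa [← h] at this
  · have := aux2 k.natAbs a
    rwa [sub_eq_add_neg, ← h] at this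

lemma iterate_shift_apply {v : ℤ → ℝ} (hv : ∀ j, 0 < v j) {s : ℤ} {T : X → X}
    (hT : ∀ x j, φ (T x) j = ((v j / v (j + s) : ℝ) : 𝕜) * φ x (j + s)) (n : ℕ) (x : X) (j : ℤ) :
    φ (T^[n] x) j = ((v j / v (j + n * s) : ℝ) : 𝕜) * φ x (j + n * s) := by
  induction n generalizing j with
  | zero => simp [(hv j).ne']
  | succ n ih =>
    have hidx : j + s + n * s = j + (n + 1 : ℕ) * s := by push_cast; ring
    rw [Function.iterate_succ_apply', hT, ih, hidx, ← mul_assoc, ← RCLike.ofReal_mul,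
      div_mul_div_cancel₀ (hv _).ne']

lemma iterate_shift_single (H : IsShiftSolid φ e) {v : ℤ → ℝ} (hv : ∀ j, 0 < v j) {s : ℤ}
    {T : X → X} (hT : ∀ x j, φ (T x) j = ((v j / v (j + s) : ℝ) : 𝕜) * φ x (j + s))
    (n : ℕ) (k : ℤ) :
    ‖T^[n] (e k)‖ = v (k - n * s) / v k := by
  have : T^[n] (e k) = ((v (k - n * s) / v k : ℝ) : 𝕜) • e (k - n * s) := by
    apply H.injective
    ext j
    rw [iterate_shift_apply hv hT, map_smul, Pi.smul_apply, H.map_single, H.map_single, smul_eq_mul]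
    by_cases h : j = k - n * s
    · subst h; simp
    · rw [Pi.single_eq_of_ne h, Pi.single_eq_of_ne (fun h' => h (by rw [← h']; ring))]
      simp
  rw [this, norm_smul, H.norm_single, mul_one, RCLike.norm_ofReal,
    abs_of_pos (div_pos (hv _) (hv _))]

/-- Every unit vector has an orbit of size at most a multiple of `v n`, and every nonzero vector one
of size at least a multiple of `v n`. Evenness of `v` makes this the same statement for the shifts
in both directions `s = ±1`. -/
lemma shift_growth (H : IsShiftSolid φ e) {v : ℤ → ℝ} (hv : ∀ j, 0 < v j)
    (hsymm : ∀ j, v (-j) = v j) (h1 : ∀ j, v (j + 1) ≤ 2 * v j) (h2 : ∀ j, v j ≤ 2 * v (j + 1))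
    {s : ℤ} (hs : s = 1 ∨ s = -1) {T : X → X}
    (hT : ∀ x j, φ (T x) j = ((v j / v (j + s) : ℝ) : 𝕜) * φ x (j + s)) :
    (∀ k, ∃ C, ∀ n : ℕ, ‖T^[n] (e k)‖ ≤ C * v n) ∧
    (∀ x : X, x ≠ 0 → ∃ c > 0, ∀ n : ℕ, c * v n ≤ ‖T^[n] x‖) := by
  have hns : ∀ n : ℕ, v (-(n * s)) = v n := by
    intro n
    rcases hs with rfl | rfl <;> simp [hsymm]
  constructor
  · intro k
    refine ⟨2 ^ k.natAbs / v k, fun n => ?_⟩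
    rw [iterate_shift_single H hv hT, div_mul_eq_mul_div]
    have := le_two_pow_natAbs_mul h1 h2 k (-(n * s))
    rw [hns, neg_add_eq_sub] at this
    exact div_le_div_of_nonneg_right this (hv k).le
  · intro x hx
    obtain ⟨k, hk⟩ : ∃ k, φ x k ≠ 0 := by
      by_contra! h
      exact hx (H.injective (by rw [map_zero]; exact funext h))
    have hk' := norm_pos_iff.mpr hk
    have hvk := hv k
    refine ⟨‖φ x k‖ / (2 ^ k.natAbs * v k), by positivity, fun n => ?_⟩
    have hle := H.norm_apply_le (T^[n] x) (k - n * s)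
    rw [iterate_shift_apply hv hT, sub_add_cancel, norm_mul, RCLike.norm_ofReal,
      abs_of_pos (div_pos (hv _) (hv _))] at hle
    refine le_trans ?_ hle
    have := le_two_pow_natAbs_mul h1 h2 (-k) (k - n * s)
    rw [sub_add_eq_add_sub, add_neg_cancel, zero_sub, hns, Int.natAbs_neg] at this
    calc ‖φ x k‖ / (2 ^ k.natAbs * v k) * v n
        ≤ ‖φ x k‖ / (2 ^ k.natAbs * v k) * (2 ^ k.natAbs * v (k - n * s)) := by gcongr
      _ = v (k - n * s) / v k * ‖φ x k‖ := by field_simp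

/-- The weighted shift with bounded weights `u`, as a bounded linear map. -/
lemma IsShiftSolid.exists_shift (H : IsShiftSolid φ e) (u : ℤ → 𝕜) {C : ℝ} (hC : 0 ≤ C)
    (hu : ∀ j, ‖u j‖ ≤ C) (s : ℤ) :
    ∃ S : X →ₗ[𝕜] X, (∀ x j, φ (S x) j = u j * φ x (j + s)) ∧ ∀ x, ‖S x‖ ≤ C * ‖x‖ := by
  choose S hS hSn using fun x : X => H.solid x (fun j => u j * φ x (j + s)) C s hC fun j => by
    rw [norm_mul]; gcongr; exact hu j
  refine ⟨{ toFun := S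
            map_add' := fun x y => H.injective ?_
            map_smul' := fun c x => H.injective ?_ },
    fun x j => congrFun (hS x) j, hSn⟩
  · ext j
    simp only [map_add, hS, Pi.add_apply]
    ring
  · ext j
    simp only [map_smul, hS, Pi.smul_apply, smul_eq_mul, RingHom.id_apply]
    ring

theorem IsShiftSolid.main (H : IsShiftSolid φ e) :
    ∃ w : ℤ → 𝕜, (∃ M : ℝ, ∀ j, ‖w j‖ ≤ M) ∧ (∃ δ : ℝ, 0 < δ ∧ ∀ j, δ ≤ ‖w j‖) ∧
      ∃ Bw : X ≃L[𝕜] X,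
        (∀ (x : X) (j : ℤ), φ (Bw x) j = w (j + 1) * φ x (j + 1)) ∧
        TopologicallyTransitive ⇑Bw ∧
        AvgPosExpansiveNorm ⇑Bw ∧ AvgPosExpansiveNorm ⇑Bw.symm ∧
        DistributionallyChaotic ⇑Bw ∧ DistributionallyChaotic ⇑Bw.symm := by
  obtain ⟨v, hv, hv0, hsymm, h1, h2, hbig, hsmall⟩ := exists_profile
  have hnorm : ∀ i j : ℤ, ‖((v i / v j : ℝ) : 𝕜)‖ = v i / v j := fun i j => by
    rw [RCLike.norm_ofReal, abs_of_pos (div_pos (hv _) (hv _))]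
  obtain ⟨S, hS, hSn⟩ := H.exists_shift (fun j => ((v j / v (j + 1) : ℝ) : 𝕜))
    (C := 2) (by norm_num) (fun j => by
      rw [hnorm, div_le_iff₀ (hv _)]; exact h2 j) 1
  obtain ⟨R, hR, hRn⟩ := H.exists_shift (fun j => ((v j / v (j + -1) : ℝ) : 𝕜))
    (C := 2) (by norm_num) (fun j => by
      rw [hnorm, div_le_iff₀ (hv _)]; simpa using h1 (j + -1)) (-1)
  have hSR : ∀ x, S (R x) = x := fun x => H.injective <| funext fun j => by
    rw [hS, hR, ← mul_assoc, ← RCLike.ofReal_mul, add_neg_cancel_right,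
      div_mul_div_cancel₀ (hv _).ne', div_self (hv _).ne', RCLike.ofReal_one, one_mul]
  have hRS : ∀ x, R (S x) = x := fun x => H.injective <| funext fun j => by
    rw [hR, hS, ← mul_assoc, ← RCLike.ofReal_mul, neg_add_cancel_right,
      div_mul_div_cancel₀ (hv _).ne', div_self (hv _).ne', RCLike.ofReal_one, one_mul]
  let E : X ≃ₗ[𝕜] X := LinearEquiv.ofLinearMap S R (LinearMap.ext hSR) (LinearMap.ext hRS)
  let T : X ≃L[𝕜] X := E.toContinuousLinearEquivOfBounds 2 2 hSn hRn
  have hT : ∀ x j, φ (T x) j = ((v j / v (j + 1) : ℝ) : 𝕜) * φ x (j + 1) := hS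
  have hT' : ∀ x j, φ (T.symm x) j = ((v j / v (j + -1) : ℝ) : 𝕜) * φ x (j + -1) := hR
  obtain ⟨up, low⟩ := shift_growth H hv hsymm h1 h2 (Or.inl rfl) hT
  obtain ⟨up', low'⟩ := shift_growth H hv hsymm h1 h2 (Or.inr rfl) hT'
  have orb : ∀ n : ℕ, ‖T^[n] (e 0)‖ = v n := fun n => by
    rw [iterate_shift_single H hv hT]; simp [hv0, hsymm]
  have orb' : ∀ n : ℕ, ‖T.symm^[n] (e 0)‖ = v n := fun n => by
    rw [iterate_shift_single H hv hT']; simp [hv0]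
  refine ⟨fun j => ((v (j - 1) / v j : ℝ) : 𝕜), ⟨2, fun j => ?_⟩, ⟨1 / 2, by norm_num, fun j => ?_⟩,
    T, fun x j => by simpa using hT x j, ?_, ?_, ?_, ?_, ?_⟩
  · rw [hnorm, div_le_iff₀ (hv _)]
    simpa using h2 (j - 1)
  · rw [hnorm, le_div_iff₀ (hv _)]
    have := h1 (j - 1)
    rw [sub_add_cancel] at this
    linarith
  · exact topologicallyTransitive_of_orbit T e (fun n => v n) H.dense_span up up' (fun n => hv n)
      fun τ hτ => nonempty_of_upperDensity_eq_one (hsmall τ hτ)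
  · exact avgPosExpansiveNorm_of_lower_bound T (fun n => v n) low hbig
  · exact avgPosExpansiveNorm_of_lower_bound T.symm (fun n => v n) low' hbig
  · exact distributionallyChaotic_of_orbit (T : X →L[𝕜] X) (e 0) (fun n => v n) (fun n => hv n)
      orb hbig hsmall
  · exact distributionallyChaotic_of_orbit (T.symm : X →L[𝕜] X) (e 0) (fun n => v n)
      (fun n => hv n) orb' hbig hsmall

end Shift

/-! ### The spaces `c₀(ℤ)` and `ℓ^p(ℤ)` -/

section Spaces

variable (𝕜 : Type*) [RCLike 𝕜]

/-- The coordinates of an element of `c₀(ℤ)`. -/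
def c0Coord : C₀(ℤ, 𝕜) →ₗ[𝕜] (ℤ → 𝕜) where
  toFun x := x
  map_add' _ _ := rfl
  map_smul' _ _ := rfl

/-- The unit vectors of `c₀(ℤ)`. -/
def c0Single (k : ℤ) : C₀(ℤ, 𝕜) where
  toFun := Pi.single k 1
  continuous_toFun := continuous_of_discreteTopology
  zero_at_infty' := by
    rw [cocompact_eq_cofinite]
    refine tendsto_nhds_of_eventually_eq ?_
    filter_upwards [(Set.finite_singleton k).compl_mem_cofinite] with j hj
    exact Pi.single_eq_of_ne hj 1

variable {𝕜} in
lemma c0_norm_apply_le (x : C₀(ℤ, 𝕜)) (k : ℤ) : ‖x k‖ ≤ ‖x‖ :=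
  x.toBCF.norm_coe_le_norm k

variable {𝕜} in
lemma c0_norm_le {x : C₀(ℤ, 𝕜)} {C : ℝ} (hC : 0 ≤ C) (h : ∀ k, ‖x k‖ ≤ C) : ‖x‖ ≤ C :=
  (BoundedContinuousFunction.norm_le (f := x.toBCF) hC).mpr h

lemma isShiftSolid_c0 : IsShiftSolid (c0Coord 𝕜) (c0Single 𝕜) where
  injective := DFunLike.coe_injective
  norm_apply_le := c0_norm_apply_le
  map_single _ := rfl
  norm_single k := by
    apply le_antisymm
    · refine c0_norm_le zero_le_one fun j => ?_
      change ‖(Pi.single k 1 : ℤ → 𝕜) j‖ ≤ 1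
      by_cases h : j = k
      · subst h; simp
      · simp [Pi.single_eq_of_ne h]
    · have : ‖(Pi.single k 1 : ℤ → 𝕜) k‖ ≤ _ := c0_norm_apply_le (c0Single 𝕜 k) k
      simpa using this
  dense_span := by
    rw [Metric.dense_iff]
    intro x r hr
    have hx : ∀ᶠ j in cofinite, ‖x j‖ < r / 2 := by
      have := x.zero_at_infty'
      rw [cocompact_eq_cofinite] at this
      simpa using this.norm.eventually_lt_const (by simpa using half_pos hr)
    have hfin : {j | ¬ ‖x j‖ < r / 2}.Finite := hx
    refine ⟨∑ k ∈ hfin.toFinset, x k • c0Single 𝕜 k, ?_,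
      Submodule.sum_mem _ fun k _ => Submodule.smul_mem _ _ (Submodule.subset_span ⟨k, rfl⟩)⟩
    rw [Metric.mem_ball, dist_comm, dist_eq_norm]
    refine lt_of_le_of_lt (c0_norm_le (half_pos hr).le fun j => ?_) (half_lt_self hr)
    have hj : (∑ k ∈ hfin.toFinset, x k • c0Single 𝕜 k : C₀(ℤ, 𝕜)) j
        = if j ∈ hfin.toFinset then x j else 0 := by
      change c0Coord 𝕜 (∑ k ∈ hfin.toFinset, x k • c0Single 𝕜 k) j = _
      rw [map_sum, Finset.sum_apply]
      have : ∀ k, c0Coord 𝕜 (x k • c0Single 𝕜 k) j = if j = k then x k else 0 := by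
        intro k
        change x k • (Pi.single k 1 : ℤ → 𝕜) j = _
        rw [Pi.single_apply]
        simp
      simp_rw [this]
      rw [Finset.sum_ite_eq]
    rw [ZeroAtInftyContinuousMap.sub_apply, hj]
    split_ifs with h
    · simpa using (half_pos hr).le
    · simp only [Set.Finite.mem_toFinset, Set.mem_ofPred_eq, not_not] at h
      simpa using h.le
  solid x f C s hC hf := by
    refine ⟨⟨⟨f, continuous_of_discreteTopology⟩, ?_⟩, rfl, ?_⟩
    · rw [cocompact_eq_cofinite]
      have hx := x.zero_at_infty'
      rw [cocompact_eq_cofinite] at hx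
      have hx' := (hx.comp (add_left_injective s).tendsto_cofinite).norm.const_mul C
      rw [norm_zero, mul_zero] at hx'
      exact squeeze_zero_norm hf hx'
    · refine c0_norm_le (by positivity) fun j => (hf j).trans ?_
      gcongr
      exact c0_norm_apply_le x _

/-- The coordinates of an element of `ℓ^p(ℤ)`. -/
def lpCoord (p : ℝ≥0∞) [Fact (1 ≤ p)] : lp (fun _ : ℤ => 𝕜) p →ₗ[𝕜] (ℤ → 𝕜) where
  toFun x := x
  map_add' _ _ := rfl
  map_smul' _ _ := rfl

lemma isShiftSolid_lp (p : ℝ≥0∞) [Fact (1 ≤ p)] (hp : p ≠ ∞) :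
    IsShiftSolid (lpCoord 𝕜 p) (fun k => lp.single p k (1 : 𝕜)) := by
  have hp1 : 1 ≤ p := Fact.out
  have hp0 : 0 < p := zero_lt_one.trans_le hp1
  have hpr : 0 < p.toReal := ENNReal.toReal_pos hp0.ne' hp
  refine ⟨Subtype.coe_injective, fun x k => lp.norm_apply_le_norm hp0.ne' x k,
    fun k => lp.coeFn_single p k 1, fun k => ?_, fun x => ?_, fun x f C s hC hf => ?_⟩
  · rw [lp.norm_single hp0, norm_one]
  · refine mem_closure_of_tendsto (lp.hasSum_single hp x) (Eventually.of_forall fun F => ?_)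
    refine Submodule.sum_mem _ fun k _ => ?_
    have : lp.single (E := fun _ : ℤ => 𝕜) p k (x k) =
        x k • lp.single (E := fun _ : ℤ => 𝕜) p k (1 : 𝕜) := by
      rw [← lp.single_smul, smul_eq_mul, mul_one]
    rw [this]
    exact Submodule.smul_mem _ _ (Submodule.subset_span ⟨k, rfl⟩)
  · have hx : Summable fun j => ‖x j‖ ^ p.toReal := (lp.memℓp x).summable hpr
    have hx' : Summable fun j => C ^ p.toReal * ‖x (j + s)‖ ^ p.toReal :=
      ((Equiv.addRight s).summable_iff.mpr hx).mul_left _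
    have hle : ∀ j, ‖f j‖ ^ p.toReal ≤ C ^ p.toReal * ‖x (j + s)‖ ^ p.toReal := fun j => by
      rw [← Real.mul_rpow hC (norm_nonneg _)]
      exact Real.rpow_le_rpow (norm_nonneg _) (hf j) hpr.le
    have hfs : Summable fun j => ‖f j‖ ^ p.toReal :=
      Summable.of_nonneg_of_le (fun j => by positivity) hle hx'
    refine ⟨⟨f, memℓp_gen hfs⟩, rfl, ?_⟩
    rw [← Real.rpow_le_rpow_iff (norm_nonneg _) (by positivity) hpr,
      Real.mul_rpow hC (norm_nonneg _), lp.norm_rpow_eq_tsum hpr, lp.norm_rpow_eq_tsum hpr]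
    calc ∑' j, ‖f j‖ ^ p.toReal ≤ ∑' j, C ^ p.toReal * ‖x (j + s)‖ ^ p.toReal :=
          hfs.tsum_le_tsum hle hx'
      _ = C ^ p.toReal * ∑' j, ‖x j‖ ^ p.toReal := by
          rw [tsum_mul_left]
          congr 1
          exact (Equiv.addRight s).tsum_eq fun j => ‖x j‖ ^ p.toReal

end Spaces

/-- On `X = c₀(ℤ)` and on `X = ℓ^p(ℤ)` (`p ∈ [1,∞)`) there exists a bounded bilateral weight
sequence `w` with `inf_j |w_j| > 0` such that the bilateral weighted backward shift
`B_w : (x_j) ↦ (w_{j+1} x_{j+1})` is an invertible bounded operator on `X` which is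
topologically transitive, and both `B_w` and `B_w⁻¹` are average positively expansive and
distributionally chaotic. -/
theorem exists_weightedBackwardShift_transitive_avgPosExpansive_distChaotic
    (𝕜 : Type*) [RCLike 𝕜] :
    (∃ w : ℤ → 𝕜, (∃ M : ℝ, ∀ j, ‖w j‖ ≤ M) ∧ (∃ δ : ℝ, 0 < δ ∧ ∀ j, δ ≤ ‖w j‖) ∧
      ∃ Bw : C₀(ℤ, 𝕜) ≃L[𝕜] C₀(ℤ, 𝕜),
        (∀ (x : C₀(ℤ, 𝕜)) (j : ℤ), Bw x j = w (j + 1) * x (j + 1)) ∧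
        TopologicallyTransitive ⇑Bw ∧
        AvgPosExpansiveNorm ⇑Bw ∧ AvgPosExpansiveNorm ⇑Bw.symm ∧
        DistributionallyChaotic ⇑Bw ∧ DistributionallyChaotic ⇑Bw.symm) ∧
    (∀ (p : ℝ≥0∞) [Fact (1 ≤ p)], p ≠ ∞ →
      ∃ w : ℤ → 𝕜, (∃ M : ℝ, ∀ j, ‖w j‖ ≤ M) ∧ (∃ δ : ℝ, 0 < δ ∧ ∀ j, δ ≤ ‖w j‖) ∧
      ∃ Bw : lp (fun _ : ℤ => 𝕜) p ≃L[𝕜] lp (fun _ : ℤ => 𝕜) p,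
        (∀ (x : lp (fun _ : ℤ => 𝕜) p) (j : ℤ), (Bw x : ∀ _ : ℤ, 𝕜) j = w (j + 1) * x (j + 1)) ∧
        TopologicallyTransitive ⇑Bw ∧
        AvgPosExpansiveNorm ⇑Bw ∧ AvgPosExpansiveNorm ⇑Bw.symm ∧
        DistributionallyChaotic ⇑Bw ∧ DistributionallyChaotic ⇑Bw.symm) := by
  exact ⟨(isShiftSolid_c0 𝕜).main, fun p _ hp => (isShiftSolid_lp 𝕜 p hp).main⟩
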